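/- For Lebesgue-almost every β ∈ (0,1), for every c > 0, the inequality ‖(q − 1/2)β‖ < c/q has infinitely many solutions q ∈ ℕ. -/

import Mathlib

/-!
Put `n = 2q - 1`. The inequality says that `β / 2` lies very close to a fraction with odd
denominator `n`, so two facts suffice.

* Every irrational `ξ` has infinitely many approximations `|d ξ - c| < 6 / d` with `d` odd
  (`exists_odd_approx`). Dirichlet's theorem gives coprime `a / b` with `b` arbitrarily large and
  `|b ξ - a| < 1 / b`. If `b` is even, solve `a d - b c = 1` with `b ≤ d < 2 b`; then `d` is odd, and
  `b (d ξ - c) = d (b ξ - a) + 1` shows that `c / d` is still a good approximation.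
  This settles the theorem for one particular constant `c`.
* Cassels' lemma (`blimsup_thickening_mul_ae_eq`): multiplying the radii of a limsup set of
  thickenings by a positive constant changes it only by a null set. Hence the constant may be
  replaced by any `1 / (k + 1)`, and these countably many constants handle every `c > 0`.
-/

open MeasureTheory Real

/-- Distance from a real number to the nearest integer. -/
noncomputable def distNearestInt (t : ℝ) : ℝ := |t - (round t : ℝ)|

open Filter Topology in
/-- Dirichlet's approximation theorem with reduced fractions of arbitrarily large denominator. -/
lemma exists_coprime_approx {ξ : ℝ} (hξ : Irrational ξ) (N : ℕ) :
    ∃ a b : ℤ, (N : ℤ) < b ∧ IsCoprime a b ∧ |(b : ℝ) * ξ - a| < 1 / b := by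
  -- `ξ` keeps a positive distance `ε` from all fractions with denominator at most `N`
  obtain ⟨ε, hε, hε0⟩ : ∃ ε : ℝ, (∀ r : ℚ, r.den ≤ N → ε ≤ dist ξ r) ∧ 0 < ε := by
    have h := (hξ.eventually_forall_le_dist_cast_rat_of_den_le N).filter_mono
      (nhdsWithin_le_nhds (s := Set.Ioi 0))
    exact (h.and self_mem_nhdsWithin).exists
  obtain ⟨m, hm⟩ := exists_nat_gt (1 / ε)
  have hm0 : (0 : ℝ) < m := (one_div_pos.mpr hε0).trans hm
  obtain ⟨r, hr, hrm⟩ := Real.exists_rat_abs_sub_le_and_den_le ξ (Nat.cast_pos.mp hm0)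
  have hd : (0 : ℝ) < r.den := Nat.cast_pos.mpr r.pos
  have hd1 : (1 : ℝ) ≤ r.den := by exact_mod_cast r.pos
  have hrm' : (r.den : ℝ) ≤ m := by exact_mod_cast hrm
  refine ⟨r.num, r.den, ?_, r.isCoprime_num_den, ?_⟩
  · by_contra! hle
    have h1 := hε r (by exact_mod_cast hle)
    rw [Real.dist_eq] at h1
    have h2 : 1 / (((m : ℝ) + 1) * r.den) < ε := by
      rw [div_lt_iff₀ (by positivity)]
      rw [div_lt_iff₀ hε0] at hm
      nlinarith [mul_pos hε0 hm0]
    linarith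
  · have hcast : (r : ℝ) = r.num / r.den := by exact_mod_cast (Rat.num_div_den r).symm
    have h3 : (r.den : ℝ) * ξ - r.num = r.den * (ξ - r) := by
      rw [hcast]; field_simp
    push_cast
    rw [h3, abs_mul, abs_of_pos hd]
    calc (r.den : ℝ) * |ξ - r| ≤ r.den * (1 / (((m : ℝ) + 1) * r.den)) := by gcongr
      _ = 1 / ((m : ℝ) + 1) := by field_simp
      _ < 1 / r.den := by gcongr; linarith

lemma exists_odd_approx {ξ : ℝ} (hξ : Irrational ξ) (N : ℕ) :
    ∃ c d : ℤ, (N : ℤ) < d ∧ Odd d ∧ |(d : ℝ) * ξ - c| < 6 / d := by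
  obtain ⟨a, b, hb, hab, h⟩ := exists_coprime_approx hξ N
  have hb0 : 0 < b := by omega
  have hbR : (0 : ℝ) < b := by exact_mod_cast hb0
  rcases Int.even_or_odd b with hev | hodd
  · obtain ⟨u, v, huv⟩ := hab
    have hu := Int.mul_ediv_add_emod u b
    have hu0 := Int.emod_nonneg u hb0.ne'
    have hu1 := Int.emod_lt_of_pos u hb0
    obtain ⟨d, hd⟩ : ∃ d, d = b + u % b := ⟨_, rfl⟩
    obtain ⟨c, hc⟩ : ∃ c, c = a - v - a * (u / b) := ⟨_, rfl⟩
    have hdet : a * d - b * c = 1 := by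
      rw [hd, hc]; linear_combination huv + a * hu
    have hbd : b ≤ d := by omega
    have hdb : d < 2 * b := by omega
    have hdR : (0 : ℝ) < d := by exact_mod_cast hb0.trans_le hbd
    have hdbR : (d : ℝ) < 2 * b := by exact_mod_cast hdb
    refine ⟨c, d, by omega, ?_, ?_⟩
    · by_contra hne
      rw [Int.not_odd_iff_even] at hne
      have : Even (1 : ℤ) := hdet ▸ (hne.mul_left a).sub (hev.mul_right c)
      simp at this
    · have hdetR : (a : ℝ) * d - b * c = 1 := by exact_mod_cast hdet
      have key : (b : ℝ) * (d * ξ - c) = d * (b * ξ - a) + 1 := by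
        linear_combination hdetR
      have h1 : (b : ℝ) * |d * ξ - c| < 3 := by
        have hmul : (b : ℝ) * |d * ξ - c| = |(b : ℝ) * (d * ξ - c)| := by
          rw [abs_mul, abs_of_pos hbR]
        rw [hmul, key]
        calc |(d : ℝ) * (b * ξ - a) + 1| ≤ |(d : ℝ) * (b * ξ - a)| + |1| := abs_add_le _ _
          _ = d * |b * ξ - a| + 1 := by rw [abs_mul, abs_of_pos hdR, abs_one]
          _ ≤ d * (1 / b) + 1 := by gcongr
          _ < 3 := by
            have : (d : ℝ) * (1 / b) < 2 := by
              rw [mul_one_div, div_lt_iff₀ hbR]; exact hdbR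
            linarith
      rw [lt_div_iff₀ hdR]
      nlinarith [abs_nonneg ((d : ℝ) * ξ - c)]
  · refine ⟨a, b, hb, hodd, h.trans ?_⟩
    gcongr
    norm_num

/-- The points `x` for which `(q - 1/2) x` is an integer. -/
def halfGrid (q : ℕ) : Set ℝ := {x | ∃ p : ℤ, ((q : ℝ) - 1 / 2) * x = p}

lemma distNearestInt_lt_of_mem_thickening {q : ℕ} (hq : 0 < q) {K β : ℝ}
    (h : β ∈ Metric.thickening (K / (q : ℝ) ^ 2) (halfGrid q)) :
    distNearestInt (((q : ℝ) - 1 / 2) * β) < K / q := by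
  obtain ⟨x, ⟨p, hp⟩, hx⟩ := Metric.mem_thickening_iff.1 h
  have hq1 : (1 : ℝ) ≤ q := by exact_mod_cast hq
  rw [Real.dist_eq] at hx
  have hK : 0 ≤ K / (q : ℝ) ^ 2 := (abs_nonneg _).trans hx.le
  refine (round_le _ p).trans_lt ?_
  rw [← hp, ← mul_sub, abs_mul, abs_of_pos (by linarith : (0 : ℝ) < q - 1 / 2)]
  calc ((q : ℝ) - 1 / 2) * |β - x| < (q - 1 / 2) * (K / (q : ℝ) ^ 2) := by
        gcongr
        linarith
    _ ≤ q * (K / (q : ℝ) ^ 2) := by gcongr; linarith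
    _ = K / q := by field_simp

lemma mem_thickening_of_abs_lt {q : ℕ} (hq : 0 < q) {K β : ℝ} {p : ℤ}
    (h : |((q : ℝ) - 1 / 2) * β - p| < K / q) :
    β ∈ Metric.thickening (2 * K / (q : ℝ) ^ 2) (halfGrid q) := by
  have hq1 : (1 : ℝ) ≤ q := by exact_mod_cast hq
  have hq2 : (0 : ℝ) < q - 1 / 2 := by linarith
  refine Metric.mem_thickening_iff.2 ⟨p / ((q : ℝ) - 1 / 2), ⟨p, mul_div_cancel₀ _ hq2.ne'⟩, ?_⟩
  rw [Real.dist_eq]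
  have h1 : ((q : ℝ) - 1 / 2) * β - p = (q - 1 / 2) * (β - p / ((q : ℝ) - 1 / 2)) := by
    rw [mul_sub, mul_div_cancel₀ _ hq2.ne']
  rw [h1, abs_mul, abs_of_pos hq2, lt_div_iff₀ (by linarith)] at h
  rw [lt_div_iff₀ (by positivity)]
  have h2 := abs_nonneg (β - p / ((q : ℝ) - 1 / 2))
  -- here `q / 2 ≤ q - 1 / 2` is used
  have h3 : 0 ≤ |β - p / ((q : ℝ) - 1 / 2)| * (q * (q - 1)) :=
    mul_nonneg h2 (mul_nonneg (by linarith) (by linarith))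
  nlinarith

/-- An irrational `β` lies in infinitely many thickenings of `halfGrid q` of radius `12 / q ^ 2`. -/
lemma infinite_mem_thickening {β : ℝ} (hβ : Irrational β) :
    {q : ℕ | 0 < q ∧ β ∈ Metric.thickening (12 / (q : ℝ) ^ 2) (halfGrid q)}.Infinite := by
  refine Set.infinite_of_not_bddAbove fun ⟨B, hB⟩ => ?_
  have hβ2 : Irrational (β / 2) := by simpa using hβ.div_natCast (m := 2) two_ne_zero
  obtain ⟨c, d, hd, ⟨k, hk⟩, h⟩ := exists_odd_approx hβ2 (2 * B + 1)
  obtain ⟨q, hq⟩ : ∃ q : ℕ, (q : ℤ) = k + 1 := ⟨(k + 1).toNat, Int.toNat_of_nonneg (by omega)⟩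
  have hqB : B < q := by omega
  have hq1 : (1 : ℝ) ≤ q := by exact_mod_cast (by omega : 1 ≤ q)
  have hdq : (d : ℝ) = 2 * q - 1 := by exact_mod_cast (by omega : d = 2 * (q : ℤ) - 1)
  refine hqB.not_ge (hB ⟨by omega, ?_⟩)
  have h6 : |((q : ℝ) - 1 / 2) * β - c| < 6 / q := by
    rw [hdq] at h
    calc |((q : ℝ) - 1 / 2) * β - c| = |(2 * (q : ℝ) - 1) * (β / 2) - c| := by ring_nf
      _ < 6 / (2 * q - 1) := h
      _ ≤ 6 / q := by gcongr; linarith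
  have := mem_thickening_of_abs_lt (by omega) h6
  norm_num at this
  exact this

open Filter Topology in
lemma ae_infinite_mem_thickening {M : ℝ} (hM : 0 < M) :
    ∀ᵐ β : ℝ, {q : ℕ | 0 < q ∧
      β ∈ Metric.thickening (M * (12 / (q : ℝ) ^ 2)) (halfGrid q)}.Infinite := by
  have hr : Tendsto (fun q : ℕ => 12 / (q : ℝ) ^ 2) atTop (𝓝 0) :=
    tendsto_const_nhds.div_atTop
      ((tendsto_pow_atTop two_ne_zero).comp tendsto_natCast_atTop_atTop)
  have h := blimsup_thickening_mul_ae_eq (volume : Measure ℝ) (fun q => 0 < q) halfGrid hM _ hr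
  have hirr : ∀ᵐ β : ℝ, Irrational β := (Set.countable_range ((↑) : ℚ → ℝ)).ae_notMem _
  filter_upwards [h.mem_iff, hirr] with β hβ hβi
  rw [← Nat.cofinite_eq_atTop, cofinite.blimsup_set_eq, cofinite.blimsup_set_eq] at hβ
  exact hβ.2 (infinite_mem_thickening hβi)

/-- For Lebesgue-almost every β ∈ (0,1), for every c > 0, the inequality
‖(q − 1/2)β‖ < c/q has infinitely many solutions q ∈ ℕ. -/
theorem stmt15 :
    ∀ᵐ β ∂(volume.restrict (Set.Ioo (0 : ℝ) 1)),
      ∀ c > (0 : ℝ),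
        {q : ℕ | 0 < q ∧
          distNearestInt (((q : ℝ) - 1 / 2) * β) < c / (q : ℝ)}.Infinite := by
  refine ae_restrict_of_ae ?_
  have h : ∀ᵐ β : ℝ, ∀ k : ℕ, {q : ℕ | 0 < q ∧ β ∈ Metric.thickening
      ((1 / (12 * ((k : ℝ) + 1))) * (12 / (q : ℝ) ^ 2)) (halfGrid q)}.Infinite :=
    ae_all_iff.2 fun k => ae_infinite_mem_thickening (by positivity)
  filter_upwards [h] with β hβ c hc
  obtain ⟨k, hk⟩ := exists_nat_one_div_lt hc
  refine (hβ k).mono ?_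
  rintro q ⟨hq, hmem⟩
  refine ⟨hq, ?_⟩
  have hrad : (1 / (12 * ((k : ℝ) + 1))) * (12 / (q : ℝ) ^ 2) =
      (1 / ((k : ℝ) + 1)) / (q : ℝ) ^ 2 := by
    field_simp
  rw [hrad] at hmem
  have hq0 : (0 : ℝ) < q := by exact_mod_cast hq
  exact (distNearestInt_lt_of_mem_thickening hq hmem).trans (by gcongr)
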